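/- For all i, j, k ∈ ℕ, the element (A♮)^i (D♮)^j (B♮)^k of F[a,b,c] ⊗ U(sl₂) lies in the sum of the subspaces F[a,b,c] ⊗ U_n for −j−k ≤ n ≤ i+j; moreover, its component in F[a,b,c] ⊗ U_{i+j} equals R^{i+j} θ^k (θ − 1⊗1)^k ∏_{ℓ=1}^{j}(θ − ℓ·(1⊗1)), and its component in F[a,b,c] ⊗ U_{−j−k} equals ϑ^i (ϑ + 1⊗1)^i (∏_{ℓ=0}^{j−1}(ϑ − ℓ·(1⊗1))) L^{j+k}. -/

import Mathlib

open scoped TensorProduct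

noncomputable section

namespace RacahPaper

variable (F : Type) [Field F]

/-- Defining relations of `U(sl₂)`: generators `e = ι 0`, `f = ι 1`, `h = ι 2` with
`he - eh = 2e`, `hf - fh = -2f`, `ef - fe = h`. -/
inductive slRel : FreeAlgebra F (Fin 3) → FreeAlgebra F (Fin 3) → Prop
  | he : slRel (FreeAlgebra.ι F 2 * FreeAlgebra.ι F 0 - FreeAlgebra.ι F 0 * FreeAlgebra.ι F 2)
      (2 * FreeAlgebra.ι F 0)
  | hf : slRel (FreeAlgebra.ι F 2 * FreeAlgebra.ι F 1 - FreeAlgebra.ι F 1 * FreeAlgebra.ι F 2)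
      (-(2 * FreeAlgebra.ι F 1))
  | ef : slRel (FreeAlgebra.ι F 0 * FreeAlgebra.ι F 1 - FreeAlgebra.ι F 1 * FreeAlgebra.ι F 0)
      (FreeAlgebra.ι F 2)

/-- The universal enveloping algebra `U(sl₂)`. -/
abbrev U := RingQuot (slRel F)

/-- The generator `e` of `U(sl₂)`. -/
def e : U F := RingQuot.mkAlgHom F (slRel F) (FreeAlgebra.ι F 0)

/-- The generator `f` of `U(sl₂)`. -/
def f : U F := RingQuot.mkAlgHom F (slRel F) (FreeAlgebra.ι F 1)

/-- The generator `h` of `U(sl₂)`. -/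
def h : U F := RingQuot.mkAlgHom F (slRel F) (FreeAlgebra.ι F 2)

/-- The equitable generator `x = -f - h/2`. -/
def ux : U F := -f F - (2 : F)⁻¹ • h F

/-- The equitable generator `y = h/2`. -/
def uy : U F := (2 : F)⁻¹ • h F

/-- The equitable generator `z = e - h/2`. -/
def uz : U F := e F - (2 : F)⁻¹ • h F

/-- The normalized Casimir element `Λ = ef + h(h-2)/4` of `U(sl₂)`. -/
def Lam : U F := e F * f F + (4 : F)⁻¹ • (h F * (h F - 2))

/-- `ν_x = f/2`. -/
def nux : U F := (2 : F)⁻¹ • f F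

/-- `ν_z = e/2`. -/
def nuz : U F := (2 : F)⁻¹ • e F

/-- `U_n`: the span of the `e^i h^j f^k` with `k - i = n`. -/
def Usub (n : ℤ) : Submodule F (U F) :=
  Submodule.span F {u : U F | ∃ i j k : ℕ, (k : ℤ) - (i : ℤ) = n ∧ u = e F ^ i * h F ^ j * f F ^ k}

-- Racah algebra
/-- Generator `A` of the free algebra. -/
def fA : FreeAlgebra F (Fin 4) := FreeAlgebra.ι F 0
/-- Generator `B` of the free algebra. -/
def fB : FreeAlgebra F (Fin 4) := FreeAlgebra.ι F 1
/-- Generator `C` of the free algebra. -/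
def fC : FreeAlgebra F (Fin 4) := FreeAlgebra.ι F 2
/-- Generator `D` of the free algebra. -/
def fD : FreeAlgebra F (Fin 4) := FreeAlgebra.ι F 3

/-- `α = [A,D] + AC - BA` in the free algebra. -/
def falpha : FreeAlgebra F (Fin 4) := (fA F * fD F - fD F * fA F) + fA F * fC F - fB F * fA F
/-- `β = [B,D] + BA - CB` in the free algebra. -/
def fbeta : FreeAlgebra F (Fin 4) := (fB F * fD F - fD F * fB F) + fB F * fA F - fC F * fB F
/-- `γ = [C,D] + CB - AC` in the free algebra. -/
def fgamma : FreeAlgebra F (Fin 4) := (fC F * fD F - fD F * fC F) + fC F * fB F - fA F * fC F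

/-- Defining relations of the Racah algebra: `[A,B] = [B,C] = [C,A] = 2D` and each of
`α, β, γ` commutes with each of the generators `A, B, C, D`. -/
inductive racahRel : FreeAlgebra F (Fin 4) → FreeAlgebra F (Fin 4) → Prop
  | AB : racahRel (fA F * fB F - fB F * fA F) (2 * fD F)
  | BC : racahRel (fB F * fC F - fC F * fB F) (2 * fD F)
  | CA : racahRel (fC F * fA F - fA F * fC F) (2 * fD F)
  | calpha (i : Fin 4) : racahRel (falpha F * FreeAlgebra.ι F i) (FreeAlgebra.ι F i * falpha F)
  | cbeta (i : Fin 4) : racahRel (fbeta F * FreeAlgebra.ι F i) (FreeAlgebra.ι F i * fbeta F)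
  | cgamma (i : Fin 4) : racahRel (fgamma F * FreeAlgebra.ι F i) (FreeAlgebra.ι F i * fgamma F)

/-- The Racah algebra `ℜ`. -/
abbrev Racah := RingQuot (racahRel F)

/-- Generator `A` of the Racah algebra. -/
def A : Racah F := RingQuot.mkAlgHom F (racahRel F) (fA F)
/-- Generator `B` of the Racah algebra. -/
def B : Racah F := RingQuot.mkAlgHom F (racahRel F) (fB F)
/-- Generator `C` of the Racah algebra. -/
def C : Racah F := RingQuot.mkAlgHom F (racahRel F) (fC F)
/-- Generator `D` of the Racah algebra. -/
def D : Racah F := RingQuot.mkAlgHom F (racahRel F) (fD F)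

/-- `α = [A,D] + AC - BA` in the Racah algebra. -/
def alpha : Racah F := (A F * D F - D F * A F) + A F * C F - B F * A F
/-- `β = [B,D] + BA - CB` in the Racah algebra. -/
def beta : Racah F := (B F * D F - D F * B F) + B F * A F - C F * B F
/-- `γ = [C,D] + CB - AC` in the Racah algebra. -/
def gamma : Racah F := (C F * D F - D F * C F) + C F * B F - A F * C F
/-- `δ = A + B + C` in the Racah algebra. -/
def delta : Racah F := A F + B F + C F

/-- `Ω_A = D² + (BAC + CAB)/2 + A² + Bγ - Cβ - Aδ`. -/
def OmegaA : Racah F :=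
  D F ^ 2 + (2 : F)⁻¹ • (B F * A F * C F + C F * A F * B F) + A F ^ 2
    + B F * gamma F - C F * beta F - A F * delta F

/-- `Ω_B = D² + (CBA + ABC)/2 + B² + Cα - Aγ - Bδ`. -/
def OmegaB : Racah F :=
  D F ^ 2 + (2 : F)⁻¹ • (C F * B F * A F + A F * B F * C F) + B F ^ 2
    + C F * alpha F - A F * gamma F - B F * delta F

/-- `Ω_C = D² + (ACB + BCA)/2 + C² + Aβ - Bα - Cδ`. -/
def OmegaC : Racah F :=
  D F ^ 2 + (2 : F)⁻¹ • (A F * C F * B F + B F * C F * A F) + C F ^ 2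
    + A F * beta F - B F * alpha F - C F * delta F

-- the tensor algebra F[a,b,c] ⊗ U(sl2)
/-- The polynomial algebra `F[a,b,c]`. -/
abbrev P := MvPolynomial (Fin 3) F

/-- The tensor product algebra `F[a,b,c] ⊗ U(sl₂)`. -/
abbrev T := P F ⊗[F] U F

/-- The indeterminate `a`. -/
def pa : P F := MvPolynomial.X 0
/-- The indeterminate `b`. -/
def pb : P F := MvPolynomial.X 1
/-- The indeterminate `c`. -/
def pc : P F := MvPolynomial.X 2

/-- `A♮`. -/
def Anat : T F :=
  (pa F * (pa F + 1)) ⊗ₜ[F] (1 : U F) + (pb F - pc F - pa F) ⊗ₜ[F] ux F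
    + (pa F + pb F - pc F + 1) ⊗ₜ[F] uy F - (1 : P F) ⊗ₜ[F] (ux F * uy F)

/-- `B♮`. -/
def Bnat : T F :=
  (pb F * (pb F + 1)) ⊗ₜ[F] (1 : U F) + (pc F - pa F - pb F) ⊗ₜ[F] uy F
    + (pb F + pc F - pa F + 1) ⊗ₜ[F] uz F - (1 : P F) ⊗ₜ[F] (uy F * uz F)

/-- `C♮`. -/
def Cnat : T F :=
  (pc F * (pc F + 1)) ⊗ₜ[F] (1 : U F) + (pa F - pb F - pc F) ⊗ₜ[F] uz F
    + (pc F + pa F - pb F + 1) ⊗ₜ[F] ux F - (1 : P F) ⊗ₜ[F] (uz F * ux F)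

/-- `D♮`. -/
def Dnat : T F :=
  (1 : P F) ⊗ₜ[F] (uz F * uy F * ux F + uz F * ux F)
    + (pc F + pb F * (pc F + pa F - pb F)) ⊗ₜ[F] ux F
    + (pa F + pc F * (pa F + pb F - pc F)) ⊗ₜ[F] uy F
    + (pb F + pa F * (pb F + pc F - pa F)) ⊗ₜ[F] uz F
    + (pb F - pc F) ⊗ₜ[F] (ux F * uy F)
    + (pc F - pa F) ⊗ₜ[F] (uy F * uz F)
    + (pa F - pb F) ⊗ₜ[F] (uz F * ux F)

/-- `R = 2 ⊗ yν_x + 2(c+a-b+1) ⊗ ν_x`. -/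
def Rel : T F :=
  (2 : P F) ⊗ₜ[F] (uy F * nux F) + (2 * (pc F + pa F - pb F + 1)) ⊗ₜ[F] nux F

/-- `L = -2 ⊗ yν_z - 2(a-b-c-1) ⊗ ν_z`. -/
def Lel : T F :=
  -((2 : P F) ⊗ₜ[F] (uy F * nuz F)) - (2 * (pa F - pb F - pc F - 1)) ⊗ₜ[F] nuz F

/-- `θ = 1⊗y - b⊗1`. -/
def theta : T F := (1 : P F) ⊗ₜ[F] uy F - pb F ⊗ₜ[F] (1 : U F)

/-- `ϑ = 1⊗y + a⊗1`. -/
def vartheta : T F := (1 : P F) ⊗ₜ[F] uy F + pa F ⊗ₜ[F] (1 : U F)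

/-- `F[a,b,c] ⊗ U_n` as a subspace of `F[a,b,c] ⊗ U(sl₂)`. -/
def TU (n : ℤ) : Submodule F (T F) :=
  Submodule.span F {t : T F | ∃ (p : P F) (u : U F), u ∈ Usub F n ∧ t = p ⊗ₜ[F] u}

theorem r_he : h F * e F = e F * h F + (2:F) • e F := by
  have := RingQuot.mkAlgHom_rel F (slRel.he (F := F))
  simp only [map_sub, map_mul, map_ofNat] at this
  rw [sub_eq_iff_eq_add] at this
  unfold h e
  rw [this, add_comm, ofNat_smul_eq_nsmul, two_nsmul, two_mul]

theorem r_hf : f F * h F = h F * f F + (2:F) • f F := by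
  have := RingQuot.mkAlgHom_rel F (slRel.hf (F := F))
  simp only [map_sub, map_mul, map_neg, map_ofNat] at this
  rw [sub_eq_iff_eq_add] at this
  unfold h f
  rw [this, ofNat_smul_eq_nsmul, two_nsmul, two_mul]
  abel

theorem r_ef : f F * e F = e F * f F - h F := by
  have := RingQuot.mkAlgHom_rel F (slRel.ef (F := F))
  simp only [map_sub, map_mul] at this
  unfold h f e
  rw [← this]
  abel

theorem gen_mem (i j k : ℕ) (n : ℤ) (hn : (k : ℤ) - i = n) :
    e F ^ i * h F ^ j * f F ^ k ∈ Usub F n :=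
  Submodule.subset_span ⟨i, j, k, hn, rfl⟩

theorem e_mul (n : ℤ) (u : U F) (hu : u ∈ Usub F n) (m : ℤ) (hm : m = n - 1) :
    e F * u ∈ Usub F m := by
  subst hm
  induction hu using Submodule.span_induction with
  | mem u hu =>
    obtain ⟨i, j, k, hn, rfl⟩ := hu
    have := gen_mem F (i+1) j k (n-1) (by push_cast; omega)
    simpa only [pow_succ', mul_assoc] using this
  | zero => simp
  | add x y _ _ hx hy => rw [mul_add]; exact add_mem hx hy
  | smul a x _ hx => rw [mul_smul_comm]; exact Submodule.smul_mem _ _ hx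

theorem h_gen (i j k : ℕ) (n : ℤ) (hn : (k : ℤ) - i = n) :
    h F * (e F ^ i * h F ^ j * f F ^ k) ∈ Usub F n := by
  induction i generalizing n with
  | zero =>
    have := gen_mem F 0 (j+1) k n hn
    simpa only [pow_succ', pow_zero, one_mul, mul_assoc] using this
  | succ i ih =>
    have h1 := ih (n+1) (by push_cast at hn; omega)
    have h2 := gen_mem F i j k (n+1) (by push_cast at hn; omega)
    have e1 : h F * (e F ^ (i+1) * h F ^ j * f F ^ k)
        = e F * (h F * (e F ^ i * h F ^ j * f F ^ k))
          + (2:F) • (e F * (e F ^ i * h F ^ j * f F ^ k)) := by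
      rw [pow_succ']
      simp only [← mul_assoc]
      rw [r_he]
      simp only [add_mul, smul_mul_assoc]
    rw [e1]
    exact add_mem (e_mul F _ _ h1 _ (by ring))
      (Submodule.smul_mem _ _ (e_mul F _ _ h2 _ (by ring)))

theorem h_mul (n : ℤ) (u : U F) (hu : u ∈ Usub F n) :
    h F * u ∈ Usub F n := by
  induction hu using Submodule.span_induction with
  | mem u hu =>
    obtain ⟨i, j, k, hn, rfl⟩ := hu
    exact h_gen F i j k n hn
  | zero => simp
  | add x y _ _ hx hy => rw [mul_add]; exact add_mem hx hy
  | smul a x _ hx => rw [mul_smul_comm]; exact Submodule.smul_mem _ _ hx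

theorem f_gen0 (j k : ℕ) (n : ℤ) (hn : (k : ℤ) + 1 = n) :
    f F * (h F ^ j * f F ^ k) ∈ Usub F n := by
  induction j with
  | zero =>
    have := gen_mem F 0 0 (k+1) n (by push_cast; omega)
    simpa only [pow_succ', pow_zero, one_mul, mul_assoc] using this
  | succ j ih =>
    have e1 : f F * (h F ^ (j+1) * f F ^ k)
        = h F * (f F * (h F ^ j * f F ^ k)) + (2:F) • (f F * (h F ^ j * f F ^ k)) := by
      rw [pow_succ']
      simp only [← mul_assoc]
      rw [r_hf]
      simp only [add_mul, smul_mul_assoc]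
    rw [e1]
    exact add_mem (h_mul F _ _ ih) (Submodule.smul_mem _ _ ih)

theorem f_gen (i j k : ℕ) (n : ℤ) (hn : (k : ℤ) - i + 1 = n) :
    f F * (e F ^ i * h F ^ j * f F ^ k) ∈ Usub F n := by
  induction i generalizing n with
  | zero =>
    have := f_gen0 F j k n (by simpa using hn)
    simpa only [pow_zero, one_mul] using this
  | succ i ih =>
    have h1 := ih (n+1) (by push_cast at hn; omega)
    have h2 := h_gen F i j k n (by push_cast at hn; omega)
    have e1 : f F * (e F ^ (i+1) * h F ^ j * f F ^ k)
        = e F * (f F * (e F ^ i * h F ^ j * f F ^ k))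
          - h F * (e F ^ i * h F ^ j * f F ^ k) := by
      rw [pow_succ']
      simp only [← mul_assoc]
      rw [r_ef]
      simp only [sub_mul]
    rw [e1]
    exact sub_mem (e_mul F _ _ h1 _ (by ring)) h2

theorem f_mul (n : ℤ) (u : U F) (hu : u ∈ Usub F n) (m : ℤ) (hm : m = n + 1) :
    f F * u ∈ Usub F m := by
  subst hm
  induction hu using Submodule.span_induction with
  | mem u hu =>
    obtain ⟨i, j, k, hn, rfl⟩ := hu
    exact f_gen F i j k _ (by omega)
  | zero => simp
  | add x y _ _ hx hy => rw [mul_add]; exact add_mem hx hy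
  | smul a x _ hx => rw [mul_smul_comm]; exact Submodule.smul_mem _ _ hx

theorem U_mul (m n : ℤ) (u v : U F) (hu : u ∈ Usub F m) (hv : v ∈ Usub F n) :
    u * v ∈ Usub F (m + n) := by
  induction hu using Submodule.span_induction with
  | mem u hu =>
    obtain ⟨i, j, k, hn, rfl⟩ := hu
    have hf : ∀ k : ℕ, f F ^ k * v ∈ Usub F (n + k) := by
      intro k
      induction k with
      | zero => simpa using hv
      | succ k ih =>
        rw [pow_succ', mul_assoc]
        exact f_mul F _ _ ih _ (by push_cast; ring)
    have hh : ∀ j : ℕ, h F ^ j * (f F ^ k * v) ∈ Usub F (n + k) := by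
      intro j
      induction j with
      | zero => simpa using hf k
      | succ j ih =>
        rw [pow_succ', mul_assoc]
        exact h_mul F _ _ ih
    have he : ∀ i : ℕ, e F ^ i * (h F ^ j * (f F ^ k * v)) ∈ Usub F (n + k - i) := by
      intro i
      induction i with
      | zero => simpa using hh j
      | succ i ih =>
        rw [pow_succ', mul_assoc]
        exact e_mul F _ _ ih _ (by push_cast; ring)
    have := he i
    rw [← hn, mul_assoc, mul_assoc]
    convert this using 2
    ring
  | zero => simp
  | add x y _ _ hx hy => rw [add_mul]; exact add_mem hx hy
  | smul a x _ hx => rw [smul_mul_assoc]; exact Submodule.smul_mem _ _ hx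

theorem T_mul (m n : ℤ) (s t : T F) (hs : s ∈ TU F m) (ht : t ∈ TU F n) :
    s * t ∈ TU F (m + n) := by
  induction hs using Submodule.span_induction with
  | mem s hs =>
    obtain ⟨p, u, hu, rfl⟩ := hs
    induction ht using Submodule.span_induction with
    | mem t ht =>
      obtain ⟨q, v, hv, rfl⟩ := ht
      rw [Algebra.TensorProduct.tmul_mul_tmul]
      exact Submodule.subset_span ⟨_, _, U_mul F m n u v hu hv, rfl⟩
    | zero => simp
    | add x y _ _ hx hy => rw [mul_add]; exact add_mem hx hy
    | smul a x _ hx => rw [mul_smul_comm]; exact Submodule.smul_mem _ _ hx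
  | zero => simp
  | add x y _ _ hx hy => rw [add_mul]; exact add_mem hx hy
  | smul a x _ hx => rw [smul_mul_assoc]; exact Submodule.smul_mem _ _ hx

/-- The decomposition predicate. -/
def Dec (lo hi : ℤ) (top bot w : T F) : Prop :=
  ∃ t : ℤ → T F, (∀ n, t n ∈ TU F n) ∧ (∀ n, (n < lo ∨ hi < n) → t n = 0) ∧
    w = ∑ n ∈ Finset.Icc lo hi, t n ∧ t hi = top ∧ t lo = bot

theorem Dec.mul {l1 h1 l2 h2 : ℤ} {p1 b1 w1 p2 b2 w2 : T F} (le1 : l1 ≤ h1)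
    (H1 : Dec F l1 h1 p1 b1 w1) (H2 : Dec F l2 h2 p2 b2 w2) :
    Dec F (l1 + l2) (h1 + h2) (p1 * p2) (b1 * b2) (w1 * w2) := by
  obtain ⟨t, ht, zt, rfl, rfl, rfl⟩ := H1
  obtain ⟨s, hs, zs, rfl, rfl, rfl⟩ := H2
  refine ⟨fun n => ∑ m ∈ Finset.Icc l1 h1, t m * s (n - m), ?_, ?_, ?_, ?_, ?_⟩
  · intro n
    refine sum_mem fun m _ => ?_
    have := T_mul F m (n - m) _ _ (ht m) (hs (n - m))
    rwa [add_sub_cancel] at this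
  · intro n hn
    refine Finset.sum_eq_zero fun m hm => ?_
    rw [Finset.mem_Icc] at hm
    rw [zs (n - m) (by omega), mul_zero]
  · rw [Finset.sum_comm, Finset.sum_mul]
    refine Finset.sum_congr rfl fun m hm => ?_
    rw [Finset.mem_Icc] at hm
    rw [← Finset.mul_sum]
    congr 1
    have e1 : ∑ n ∈ Finset.Icc l2 h2, s n = ∑ n ∈ Finset.Icc (l2 + m) (h2 + m), s (n - m) := by
      rw [← Finset.map_add_right_Icc, Finset.sum_map]
      simp
    rw [e1]
    refine Finset.sum_subset (Finset.Icc_subset_Icc (by omega) (by omega)) ?_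
    intro n _ hn
    rw [Finset.mem_Icc] at hn
    exact zs _ (by omega)
  · show ∑ m ∈ Finset.Icc l1 h1, t m * s (h1 + h2 - m) = _
    rw [Finset.sum_eq_single h1]
    · rw [add_sub_cancel_left]
    · intro m hm hne
      rw [Finset.mem_Icc] at hm
      rw [zs _ (by omega), mul_zero]
    · intro hm
      exact absurd (Finset.mem_Icc.2 ⟨le1, le_refl _⟩) hm
  · show ∑ m ∈ Finset.Icc l1 h1, t m * s (l1 + l2 - m) = _
    rw [Finset.sum_eq_single l1]
    · rw [add_sub_cancel_left]
    · intro m hm hne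
      rw [Finset.mem_Icc] at hm
      rw [zs _ (by omega), mul_zero]
    · intro hm
      exact absurd (Finset.mem_Icc.2 ⟨le_refl _, le1⟩) hm

theorem tmul_mem (p : P F) (u : U F) (n : ℤ) (hu : u ∈ Usub F n) : p ⊗ₜ[F] u ∈ TU F n :=
  Submodule.subset_span ⟨p, u, hu, rfl⟩

theorem one_mem_U : (1 : U F) ∈ Usub F 0 := by
  simpa using gen_mem F 0 0 0 0 (by simp)

theorem e_mem : e F ∈ Usub F (-1) := by
  simpa using gen_mem F 1 0 0 (-1) (by simp)

theorem f_mem : f F ∈ Usub F 1 := by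
  simpa using gen_mem F 0 0 1 1 (by simp)

theorem y_mem : uy F ∈ Usub F 0 :=
  Submodule.smul_mem _ _ (by simpa using gen_mem F 0 1 0 0 (by simp))

theorem Dec.one : Dec F 0 0 1 1 1 := by
  refine ⟨fun n => if n = 0 then 1 else 0, ?_, ?_, ?_, ?_, ?_⟩
  · intro n
    dsimp only
    split_ifs with hn
    · subst hn
      exact tmul_mem F 1 1 0 (one_mem_U F)
    · exact zero_mem _
  · intro n hn
    exact if_neg (by omega)
  · simp
  · simp
  · simp

theorem Dec.pow {l1 h1 : ℤ} {p1 b1 w1 : T F} (le1 : l1 ≤ h1)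
    (H1 : Dec F l1 h1 p1 b1 w1) (n : ℕ) :
    Dec F (n * l1) (n * h1) (p1 ^ n) (b1 ^ n) (w1 ^ n) := by
  induction n with
  | zero => simpa using Dec.one F
  | succ n ih =>
    have := Dec.mul F le1 H1 ih
    rw [pow_succ', pow_succ', pow_succ']
    convert this using 1 <;> push_cast <;> ring

theorem Dec.two {l : ℤ} {p b : T F} (hp : p ∈ TU F (l + 1)) (hb : b ∈ TU F l) :
    Dec F l (l + 1) p b (p + b) := by
  refine ⟨fun n => if n = l then b else if n = l + 1 then p else 0, ?_, ?_, ?_, ?_, ?_⟩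
  · intro n
    dsimp only
    split_ifs with h1 h2
    · rwa [h1]
    · rwa [h2]
    · exact zero_mem _
  · intro n hn
    dsimp only
    rw [if_neg (by omega), if_neg (by omega)]
  · have : Finset.Icc l (l + 1) = {l, l + 1} := by
      ext n; simp only [Finset.mem_Icc, Finset.mem_insert, Finset.mem_singleton]; omega
    rw [this, Finset.sum_pair (by omega)]
    simp [add_comm]
  · simp
  · simp

theorem Dec.three {p b c : T F} (hp : p ∈ TU F 1) (hc : c ∈ TU F 0) (hb : b ∈ TU F (-1)) :
    Dec F (-1) 1 p b (p + c + b) := by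
  refine ⟨fun n => if n = -1 then b else if n = 0 then c else if n = 1 then p else 0,
    ?_, ?_, ?_, ?_, ?_⟩
  · intro n
    dsimp only
    split_ifs with h1 h2 h3
    · rwa [h1]
    · rwa [h2]
    · rwa [h3]
    · exact zero_mem _
  · intro n hn
    dsimp only
    rw [if_neg (by omega), if_neg (by omega), if_neg (by omega)]
  · have : Finset.Icc (-1 : ℤ) 1 = {-1, 0, 1} := by
      ext n; simp only [Finset.mem_Icc, Finset.mem_insert, Finset.mem_singleton]; omega
    rw [this, Finset.sum_insert (by simp), Finset.sum_pair (by omega)]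
    simp
    abel
  · simp
  · simp

theorem r_ye (hchar : (2 : F) ≠ 0) : e F * uy F = uy F * e F - e F := by
  unfold uy
  rw [smul_mul_assoc, r_he, mul_smul_comm, smul_add, smul_smul, inv_mul_cancel₀ hchar, one_smul]
  abel

theorem r_yf (hchar : (2 : F) ≠ 0) : f F * uy F = uy F * f F + f F := by
  unfold uy
  rw [smul_mul_assoc, mul_smul_comm, r_hf, smul_add, smul_smul, inv_mul_cancel₀ hchar, one_smul]

/-- The embedding of `U` into `T`. -/
def Jm (u : U F) : T F := (1 : P F) ⊗ₜ[F] u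

theorem tsm (p : P F) (u : U F) : p ⊗ₜ[F] u = p • Jm F u := by
  simp [Jm, TensorProduct.smul_tmul']

theorem Jm_mul (u v : U F) : Jm F (u * v) = Jm F u * Jm F v := by simp [Jm]
theorem Jm_add (u v : U F) : Jm F (u + v) = Jm F u + Jm F v := by simp [Jm, TensorProduct.tmul_add]
theorem Jm_sub (u v : U F) : Jm F (u - v) = Jm F u - Jm F v := by simp [Jm, TensorProduct.tmul_sub]
theorem Jm_neg (u : U F) : Jm F (-u) = -Jm F u := by simp [Jm, TensorProduct.tmul_neg]
theorem Jm_one : Jm F 1 = 1 := rfl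

theorem two_half (hchar : (2 : F) ≠ 0) (p : P F) (u : U F) :
    (2 * p) ⊗ₜ[F] ((2 : F)⁻¹ • u) = p ⊗ₜ[F] u := by
  rw [← TensorProduct.smul_tmul]
  congr 1
  have : (2 * p) = (2 : F) • p := by rw [ofNat_smul_eq_nsmul, two_nsmul, two_mul]
  rw [this, smul_smul, inv_mul_cancel₀ hchar, one_smul]

theorem Rel_eq (hchar : (2 : F) ≠ 0) : Rel F =
    (1 : P F) ⊗ₜ[F] (uy F * f F) + (pc F + pa F - pb F + 1) ⊗ₜ[F] f F := by
  have := two_half F hchar 1 (uy F * f F)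
  rw [mul_one] at this
  unfold Rel nux
  rw [mul_smul_comm, two_half F hchar, this]

theorem Lel_eq (hchar : (2 : F) ≠ 0) : Lel F =
    -((1 : P F) ⊗ₜ[F] (uy F * e F)) - (pa F - pb F - pc F - 1) ⊗ₜ[F] e F := by
  have := two_half F hchar 1 (uy F * e F)
  rw [mul_one] at this
  unfold Lel nuz
  rw [mul_smul_comm, two_half F hchar, this]

theorem ux_eq : ux F = -f F - uy F := rfl
theorem uz_eq : uz F = e F - uy F := rfl

theorem Rel_mem (hchar : (2 : F) ≠ 0) : Rel F ∈ TU F 1 := by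
  rw [Rel_eq F hchar]
  exact add_mem (tmul_mem F _ _ _ (by simpa using U_mul F 0 1 _ _ (y_mem F) (f_mem F)))
    (tmul_mem F _ _ _ (f_mem F))

theorem Lel_mem (hchar : (2 : F) ≠ 0) : Lel F ∈ TU F (-1) := by
  rw [Lel_eq F hchar]
  exact sub_mem (neg_mem
    (tmul_mem F _ _ _ (by simpa using U_mul F 0 (-1) _ _ (y_mem F) (e_mem F))))
    (tmul_mem F _ _ _ (e_mem F))

theorem one_mem_T : (1 : T F) ∈ TU F 0 := tmul_mem F 1 1 0 (one_mem_U F)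

theorem theta_mem : theta F ∈ TU F 0 :=
  sub_mem (tmul_mem F _ _ _ (y_mem F)) (tmul_mem F _ _ _ (one_mem_U F))

theorem vartheta_mem : vartheta F ∈ TU F 0 :=
  add_mem (tmul_mem F _ _ _ (y_mem F)) (tmul_mem F _ _ _ (one_mem_U F))

section abstractT
variable {Q S : Type} [CommRing Q] [Ring S] [Algebra Q S] (a b c : Q) (E G Y : S)

theorem abs_A (hf : G * Y = Y * G + G) :
    (a * (a + 1)) • (1 : S) + (b - c - a) • (-G - Y) + (a + b - c + 1) • Y
      - (1 : Q) • ((-G - Y) * Y)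
    = (1 : Q) • (Y * G) + (c + a - b + 1) • G
      + ((1 : Q) • Y + a • (1 : S)) * ((1 : Q) • Y + a • (1 : S) + 1) := by
  simp only [mul_add, add_mul, sub_mul, neg_mul, smul_mul_assoc, mul_smul_comm, one_mul, mul_one,
    hf]
  match_scalars <;> ring

theorem abs_B :
    (b * (b + 1)) • (1 : S) + (c - a - b) • Y + (b + c - a + 1) • (E - Y)
      - (1 : Q) • (Y * (E - Y))
    = ((1 : Q) • Y - b • (1 : S)) * ((1 : Q) • Y - b • (1 : S) - 1)
      + (-((1 : Q) • (Y * E)) - (a - b - c - 1) • E) := by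
  simp only [mul_sub, sub_mul, smul_mul_assoc, mul_smul_comm, one_mul, mul_one]
  match_scalars <;> ring

theorem abs_D (hf : G * Y = Y * G + G) (he : E * Y = Y * E - E) :
    (1 : Q) • ((E - Y) * Y * (-G - Y) + (E - Y) * (-G - Y))
    + (c + b * (c + a - b)) • (-G - Y)
    + (a + c * (a + b - c)) • Y
    + (b + a * (b + c - a)) • (E - Y)
    + (b - c) • ((-G - Y) * Y)
    + (c - a) • (Y * (E - Y))
    + (a - b) • ((E - Y) * (-G - Y))
    = ((1 : Q) • (Y * G) + (c + a - b + 1) • G) * ((1 : Q) • Y - b • (1 : S) - 1)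
    + ((1 : Q) • (- (E * Y * G) - E * G + Y * Y * Y + Y * Y)
    - (c + b * (c + a - b)) • Y
    + (a + c * (a + b - c)) • Y
    - (b + a * (b + c - a)) • Y
    - (b - c) • (Y * Y)
    - (c - a) • (Y * Y)
    + (a - b) • (Y * Y - E * G))
    + ((1 : Q) • Y + a • (1 : S)) * (-((1 : Q) • (Y * E)) - (a - b - c - 1) • E) := by
  have he' : ∀ t : S, E * (Y * t) = Y * (E * t) - E * t := by
    intro t
    rw [← mul_assoc, he, sub_mul, mul_assoc]
  simp only [mul_add, add_mul, sub_mul, mul_sub, neg_mul, mul_neg, smul_mul_assoc, mul_smul_comm,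
    one_mul, mul_one, hf, he, he', mul_assoc]
  match_scalars <;> ring

theorem abs_R (hf : G * Y = Y * G + G) :
    ((1 : Q) • Y - b • (1 : S)) * ((1 : Q) • (Y * G) + (c + a - b + 1) • G)
    = ((1 : Q) • (Y * G) + (c + a - b + 1) • G) * ((1 : Q) • Y - b • (1 : S) - 1) := by
  simp only [mul_add, add_mul, sub_mul, mul_sub, smul_mul_assoc, mul_smul_comm,
    one_mul, mul_one, hf, mul_assoc]
  match_scalars <;> ring

theorem abs_L (he : E * Y = Y * E - E) :
    (-((1 : Q) • (Y * E)) - (a - b - c - 1) • E) * ((1 : Q) • Y + a • (1 : S))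
    = ((1 : Q) • Y + a • (1 : S) - 1) * (-((1 : Q) • (Y * E)) - (a - b - c - 1) • E) := by
  simp only [mul_add, add_mul, sub_mul, mul_sub, neg_mul, mul_neg, smul_mul_assoc, mul_smul_comm,
    one_mul, mul_one, he, mul_assoc]
  match_scalars <;> ring

end abstractT

theorem Jf (hchar : (2 : F) ≠ 0) :
    Jm F (f F) * Jm F (uy F) = Jm F (uy F) * Jm F (f F) + Jm F (f F) := by
  rw [← Jm_mul, r_yf F hchar, Jm_add, Jm_mul]

theorem Je (hchar : (2 : F) ≠ 0) :
    Jm F (e F) * Jm F (uy F) = Jm F (uy F) * Jm F (e F) - Jm F (e F) := by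
  rw [← Jm_mul, r_ye F hchar, Jm_sub, Jm_mul]

theorem A_eq (hchar : (2 : F) ≠ 0) :
    Anat F = Rel F + vartheta F * (vartheta F + 1) := by
  rw [Rel_eq F hchar]
  unfold Anat vartheta
  simp only [ux_eq, uz_eq, tsm, Jm_mul, Jm_sub, Jm_neg, Jm_add, Jm_one]
  exact abs_A (pa F) (pb F) (pc F) (Jm F (f F)) (Jm F (uy F)) (Jf F hchar)

theorem B_eq (hchar : (2 : F) ≠ 0) :
    Bnat F = theta F * (theta F - 1) + Lel F := by
  rw [Lel_eq F hchar]
  unfold Bnat theta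
  simp only [ux_eq, uz_eq, tsm, Jm_mul, Jm_sub, Jm_neg, Jm_add, Jm_one]
  exact abs_B (pa F) (pb F) (pc F) (Jm F (e F)) (Jm F (uy F)) 

/-- Degree zero part of `D♮`. -/
def D0 : T F :=
  (1 : P F) ⊗ₜ[F] (- (e F * uy F * f F) - e F * f F + uy F * uy F * uy F + uy F * uy F)
    - (pc F + pb F * (pc F + pa F - pb F)) ⊗ₜ[F] uy F
    + (pa F + pc F * (pa F + pb F - pc F)) ⊗ₜ[F] uy F
    - (pb F + pa F * (pb F + pc F - pa F)) ⊗ₜ[F] uy F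
    - (pb F - pc F) ⊗ₜ[F] (uy F * uy F)
    - (pc F - pa F) ⊗ₜ[F] (uy F * uy F)
    + (pa F - pb F) ⊗ₜ[F] (uy F * uy F - e F * f F)

theorem D0_mem : D0 F ∈ TU F 0 := by
  have hy := y_mem F
  have hyy : uy F * uy F ∈ Usub F 0 := by simpa using U_mul F 0 0 _ _ hy hy
  have hyyy : uy F * uy F * uy F ∈ Usub F 0 := by simpa using U_mul F 0 0 _ _ hyy hy
  have hef : e F * f F ∈ Usub F 0 := by simpa using U_mul F (-1) 1 _ _ (e_mem F) (f_mem F)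
  have hey : e F * uy F ∈ Usub F (-1) := by simpa using U_mul F (-1) 0 _ _ (e_mem F) hy
  have heyf : e F * uy F * f F ∈ Usub F 0 := by simpa using U_mul F (-1) 1 _ _ hey (f_mem F)
  unfold D0
  refine add_mem (sub_mem (sub_mem (sub_mem (add_mem (sub_mem ?_ ?_) ?_) ?_) ?_) ?_) ?_ <;>
    refine tmul_mem F _ _ _ ?_
  · exact add_mem (add_mem (sub_mem (neg_mem heyf) hef) hyyy) hyy
  all_goals first | exact hy | exact hyy | exact sub_mem hyy hef

theorem D_eq (hchar : (2 : F) ≠ 0) :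
    Dnat F = Rel F * (theta F - 1) + D0 F + vartheta F * Lel F := by
  rw [Lel_eq F hchar, Rel_eq F hchar]
  unfold Dnat theta vartheta D0
  simp only [ux_eq, uz_eq, tsm, Jm_mul, Jm_sub, Jm_neg, Jm_add, Jm_one]
  exact abs_D (pa F) (pb F) (pc F) (Jm F (e F)) (Jm F (f F)) (Jm F (uy F)) (Jf F hchar) (Je F hchar)

theorem theta_R (hchar : (2 : F) ≠ 0) : theta F * Rel F = Rel F * (theta F - 1) := by
  rw [Rel_eq F hchar]
  unfold theta
  simp only [ux_eq, uz_eq, tsm, Jm_mul, Jm_sub, Jm_neg, Jm_add, Jm_one]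
  exact abs_R (pa F) (pb F) (pc F) (Jm F (f F)) (Jm F (uy F)) (Jf F hchar)

theorem L_vartheta (hchar : (2 : F) ≠ 0) :
    Lel F * vartheta F = (vartheta F - 1) * Lel F := by
  rw [Lel_eq F hchar]
  unfold vartheta
  simp only [ux_eq, uz_eq, tsm, Jm_mul, Jm_sub, Jm_neg, Jm_add, Jm_one]
  exact abs_L (pa F) (pb F) (pc F) (Jm F (e F)) (Jm F (uy F)) (Je F hchar)

theorem theta_Rpow (hchar : (2 : F) ≠ 0) (n : ℕ) :
    theta F * Rel F ^ n = Rel F ^ n * (theta F - n) := by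
  induction n with
  | zero => simp
  | succ n ih =>
    rw [pow_succ, ← mul_assoc, ih, mul_assoc, sub_mul, theta_R F hchar,
      (Nat.cast_commute n (Rel F)).eq, ← mul_sub, mul_assoc]
    push_cast
    congr 2
    abel

theorem Lpow_vartheta (hchar : (2 : F) ≠ 0) (n : ℕ) :
    Lel F ^ n * vartheta F = (vartheta F - n) * Lel F ^ n := by
  induction n with
  | zero => simp
  | succ n ih =>
    rw [pow_succ', mul_assoc, ih, ← mul_assoc, mul_sub, L_vartheta F hchar,
      ← (Nat.cast_commute n (Lel F)).eq, ← sub_mul, mul_assoc]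
    push_cast
    congr 1
    abel

theorem comm_prod (x : T F) (g : ℕ → T F) (hg : ∀ l, Commute x (g l)) (j : ℕ) :
    Commute x ((List.range j).map g).prod := by
  apply Commute.list_prod_right
  intro y hy
  obtain ⟨l, _, rfl⟩ := List.mem_map.1 hy
  exact hg l

theorem topD (hchar : (2 : F) ≠ 0) (j : ℕ) :
    (Rel F * (theta F - 1)) ^ j =
      Rel F ^ j * ((List.range j).map fun l : ℕ => theta F - ((l : T F) + 1)).prod := by
  induction j with
  | zero => simp
  | succ j ih =>
    have hc : Commute (theta F - ((j : T F) + 1))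
        ((List.range j).map fun l : ℕ => theta F - ((l : T F) + 1)).prod := by
      refine comm_prod F _ _ (fun l => ?_) j
      have h1 : ∀ n : ℕ, Commute (theta F) ((n : T F) + 1) := fun n =>
        (Nat.commute_cast _ n).add_right (Commute.one_right _)
      refine Commute.sub_left ((Commute.refl _).sub_right (h1 l))
        (Commute.sub_right (h1 j).symm ?_)
      exact_mod_cast Nat.cast_commute (j+1) (((l+1 : ℕ) : T F))
    have h2 : (theta F - 1) * Rel F ^ j = Rel F ^ j * (theta F - ((j : T F) + 1)) := by
      rw [sub_mul, theta_Rpow F hchar, one_mul, mul_sub, mul_sub, mul_add, mul_one, sub_sub]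
    rw [List.prod_range_succ, ← hc.eq, pow_succ', ih, mul_assoc, ← mul_assoc (theta F - 1), h2,
      pow_succ', mul_assoc, mul_assoc]

theorem botD (hchar : (2 : F) ≠ 0) (j : ℕ) :
    (vartheta F * Lel F) ^ j =
      ((List.range j).map fun l : ℕ => vartheta F - (l : T F)).prod * Lel F ^ j := by
  induction j with
  | zero => simp
  | succ j ih =>
    rw [List.prod_range_succ, pow_succ, ih, mul_assoc, ← mul_assoc (Lel F ^ j),
      Lpow_vartheta F hchar, pow_succ, mul_assoc, mul_assoc]

theorem coeList (g : T F → T F) (j : ℕ) :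
    ((List.range j : List ℕ) : List (T F)).map g = (List.range j).map fun l : ℕ => g (l : T F) := by
  induction List.range j with
  | nil => rfl
  | cons a l ih =>
    simp only [List.map_cons, ← ih]
    simp

theorem statement19 (hchar : (2 : F) ≠ 0) (i j k : ℕ) :
    ∃ t : ℤ → T F,
      (∀ n : ℤ, t n ∈ TU F n) ∧
      (∀ n : ℤ, (n < -(j : ℤ) - (k : ℤ) ∨ (i : ℤ) + (j : ℤ) < n) → t n = 0) ∧
      Anat F ^ i * Dnat F ^ j * Bnat F ^ k
        = ∑ n ∈ Finset.Icc (-(j : ℤ) - (k : ℤ)) ((i : ℤ) + (j : ℤ)), t n ∧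
      t ((i : ℤ) + (j : ℤ))
        = Rel F ^ (i + j) * theta F ^ k * (theta F - 1) ^ k *
            ((List.range j).map fun l => theta F - ((l : T F) + 1)).prod ∧
      t (-(j : ℤ) - (k : ℤ))
        = vartheta F ^ i * (vartheta F + 1) ^ i *
            ((List.range j).map fun l => vartheta F - (l : T F)).prod * Lel F ^ (j + k) := by
  have HA : Dec F 0 1 (Rel F) (vartheta F * (vartheta F + 1)) (Anat F) := by
    rw [A_eq F hchar]
    refine Dec.two F (l := 0) (Rel_mem F hchar) ?_
    simpa using T_mul F 0 0 _ _ (vartheta_mem F) (add_mem (vartheta_mem F) (one_mem_T F))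
  have HB : Dec F (-1) 0 (theta F * (theta F - 1)) (Lel F) (Bnat F) := by
    rw [B_eq F hchar]
    refine Dec.two F (l := -1) ?_ (Lel_mem F hchar)
    simpa using T_mul F 0 0 _ _ (theta_mem F) (sub_mem (theta_mem F) (one_mem_T F))
  have HD : Dec F (-1) 1 (Rel F * (theta F - 1)) (vartheta F * Lel F) (Dnat F) := by
    rw [D_eq F hchar]
    refine Dec.three F ?_ (D0_mem F) ?_
    · simpa using T_mul F 1 0 _ _ (Rel_mem F hchar) (sub_mem (theta_mem F) (one_mem_T F))
    · simpa using T_mul F 0 (-1) _ _ (vartheta_mem F) (Lel_mem F hchar)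
  have H := Dec.mul F (by simp; omega)
    (Dec.mul F (by simp) (Dec.pow F (by simp) HA i) (Dec.pow F (by simp) HD j))
    (Dec.pow F (by simp) HB k)
  have el : (i : ℤ) * 0 + j * (-1) + k * (-1) = -(j : ℤ) - k := by ring
  have eh : (i : ℤ) * 1 + j * 1 + k * 0 = (i : ℤ) + j := by ring
  rw [el, eh] at H
  obtain ⟨t, h1, h2, h3, h4, h5⟩ := H
  refine ⟨t, h1, h2, h3, ?_, ?_⟩
  · have c1 : Commute (theta F) (theta F - 1) :=
      (Commute.refl _).sub_right (Commute.one_right _)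
    have c2 : Commute (theta F)
        ((List.range j).map fun l : ℕ => theta F - ((l : T F) + 1)).prod :=
      comm_prod F _ _ (fun l => (Commute.refl _).sub_right
        ((Nat.commute_cast _ l).add_right (Commute.one_right _))) j
    have c3 : Commute (theta F - 1)
        ((List.range j).map fun l : ℕ => theta F - ((l : T F) + 1)).prod :=
      c2.sub_left (Commute.one_left _)
    have c4 := (c2.pow_left k).mul_left (c3.pow_left k)
    rw [coeList, h4, topD F hchar, c1.mul_pow, pow_add]
    simp only [mul_assoc]
    rw [← c4.eq, mul_assoc]
  · have c1 : Commute (vartheta F) (vartheta F + 1) :=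
      (Commute.refl _).add_right (Commute.one_right _)
    rw [coeList, h5, botD F hchar, c1.mul_pow, pow_add]
    simp only [mul_assoc]

end RacahPaper
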